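/- Let m ≥ 2, ℓ ≥ 2, k ≥ 1. Let σ₁ ∈ S_{m,1}^{1≺m}(1324), written in one-line notation as the concatenation π₁ · (1) · (m) · τ₁, where π₁ is the prefix before the entry 1 and τ₁ is the suffix after the entry m. Let σ₂ ∈ S_{ℓ,k}^{1≺ℓ}(1324), written as π₂ · (1) · θ₂ · (ℓ) · τ₂, where π₂ is the prefix before the entry 1, θ₂ is the word strictly between the entries 1 and ℓ, and τ₂ is the suffix after the entry ℓ. Let n = ℓ + m − 1, and let σ₁ ⊙ σ₂ be the word obtained by concatenating: π₂ with every entry increased by m−1, then π₁, then the entry 1, then the entry m, then θ₂ with every entry increased by m−1, then τ₂ with every entry increased by m−1, then τ₁ — where additionally the entry of σ₂ equal to 1 became the entry m and the entry of σ₂ equal to ℓ became the entry n = ℓ+m−1 (so the full word is π̂₂ π₁ 1 m θ̂₂ n τ̂₂ τ₁). Then σ₁ ⊙ σ₂ is a permutation of {1,…,n} and σ₁ ⊙ σ₂ ∈ S_{n,k+1}^{1≺n}(1324). -/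

import Mathlib

/-- A permutation of `{1,…,n}` (encoded as `Equiv.Perm (Fin n)` with 0-based values)
avoids the pattern 1324 if there are no indices `i < j < k < l` with
`σ i < σ k < σ j < σ l`. -/
def Avoids1324 {n : ℕ} (σ : Equiv.Perm (Fin n)) : Prop :=
  ¬ ∃ i j k l : Fin n, i < j ∧ j < k ∧ k < l ∧ σ i < σ k ∧ σ k < σ j ∧ σ j < σ l

/-- The set `S_{n,k}^{a ≺ n}(1324)`: 1324-avoiding permutations with the entry `a`
exactly `k` places to the left of the entry `n`, and the entries `1, …, a-1` all to
the right of `n`.  (Values are 0-based: the entry `a` is `⟨a-1, _⟩`.) -/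
def SPerm (n a k : ℕ) : Set (Equiv.Perm (Fin n)) :=
  {σ | Avoids1324 σ ∧ ∃ hn : n - 1 < n, ∃ ha : a - 1 < n,
    ((σ.symm ⟨n - 1, hn⟩ : Fin n) : ℕ) = ((σ.symm ⟨a - 1, ha⟩ : Fin n) : ℕ) + k ∧
    ∀ b : Fin n, (b : ℕ) + 1 < a → σ.symm ⟨n - 1, hn⟩ < σ.symm b}

/-- One-line notation of a permutation, as a list of 1-based values. -/
def word {n : ℕ} (σ : Equiv.Perm (Fin n)) : List ℕ :=
  List.ofFn fun i => (σ i : ℕ) + 1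

lemma pair_sub_append {x y : ℕ} {l₁ l₂ : List ℕ} (h : List.Sublist [x, y] (l₁ ++ l₂)) :
    List.Sublist [x, y] l₁ ∨ (x ∈ l₁ ∧ y ∈ l₂) ∨ List.Sublist [x, y] l₂ := by
  rw [List.sublist_append_iff] at h
  obtain ⟨a, b, hab, ha, hb⟩ := h
  match a, hab with
  | [], hab => right; right; simp at hab; rw [hab]; exact hb
  | [u], hab =>
    simp at hab
    obtain ⟨rfl, rfl⟩ := hab
    right; left
    exact ⟨by simpa using ha, by simpa using hb⟩
  | [u, v], hab =>
    simp at hab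
    obtain ⟨rfl, rfl, rfl⟩ := hab
    left; exact ha
  | (u :: v :: w :: t), hab => simp at hab

lemma pair_sub_of_mem {x y : ℕ} {l₁ l₂ : List ℕ} (hx : x ∈ l₁) (hy : y ∈ l₂) :
    List.Sublist [x, y] (l₁ ++ l₂) := by
  have := List.Sublist.append (List.singleton_sublist.2 hx) (List.singleton_sublist.2 hy)
  simpa using this

lemma pair_word {n : ℕ} (σ : Equiv.Perm (Fin n)) (x y : ℕ) :
    List.Sublist [x, y] (word σ) ↔
      ∃ i j : Fin n, i < j ∧ (σ i : ℕ) + 1 = x ∧ (σ j : ℕ) + 1 = y := by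
  constructor
  · intro h
    have : (word σ).Pairwise (fun x y => ∃ i j : Fin n, i < j ∧ (σ i : ℕ) + 1 = x ∧ (σ j : ℕ) + 1 = y) := by
      unfold word
      rw [List.pairwise_ofFn]
      intro i j hij
      exact ⟨i, j, hij, rfl, rfl⟩
    exact List.pairwise_iff_forall_sublist.1 this h
  · rintro ⟨i, j, hij, rfl, rfl⟩
    have : (word σ).Pairwise (fun x y => List.Sublist [x, y] (word σ)) :=
      List.pairwise_iff_forall_sublist.2 (fun h => h)
    conv at this =>
      arg 2
      unfold word
    rw [List.pairwise_ofFn] at this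
    exact this hij

lemma avoids_iff {n : ℕ} (σ : Equiv.Perm (Fin n)) :
    Avoids1324 σ ↔ ∀ a b c d : ℕ, a < c → c < b → b < d → List.Sublist [a, b] (word σ) →
      List.Sublist [b, c] (word σ) → List.Sublist [c, d] (word σ) → False := by
  constructor
  · intro h a b c d h1 h2 h3 hab hbc hcd
    rw [pair_word] at hab hbc hcd
    obtain ⟨i, j, hij, rfl, rfl⟩ := hab
    obtain ⟨j', k, hjk, hj, rfl⟩ := hbc
    obtain ⟨k', l, hkl, hk, rfl⟩ := hcd
    have e1 : j' = j := σ.injective (Fin.ext (by omega))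
    have e2 : k' = k := σ.injective (Fin.ext (by omega))
    subst e1 e2
    exact h ⟨i, j', k', l, hij, hjk, hkl, by rw [Fin.lt_def]; omega,
      by rw [Fin.lt_def]; omega, by rw [Fin.lt_def]; omega⟩
  · rintro h ⟨i, j, k, l, hij, hjk, hkl, h1, h2, h3⟩
    rw [Fin.lt_def] at h1 h2 h3
    refine h (σ i + 1) (σ j + 1) (σ k + 1) (σ l + 1) (by omega) (by omega) (by omega) ?_ ?_ ?_ <;>
      rw [pair_word]
    · exact ⟨i, j, hij, rfl, rfl⟩
    · exact ⟨j, k, hjk, rfl, rfl⟩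
    · exact ⟨k, l, hkl, rfl, rfl⟩

lemma pos_word {n : ℕ} (σ : Equiv.Perm (Fin n)) (s t : List ℕ) (x : ℕ) (v : Fin n)
    (h : word σ = s ++ x :: t) (hx : x = v + 1) : ((σ.symm v : Fin n) : ℕ) = s.length := by
  have hlen : (word σ).length = n := by simp [word]
  have hs : s.length < n := by rw [← hlen, h]; simp
  have h2 : (word σ)[s.length]'(by omega) = x := by simp [h]
  have h3 : (σ ⟨s.length, hs⟩ : ℕ) + 1 = x := by
    rw [← h2]; simp [word]
  have : σ ⟨s.length, hs⟩ = v := Fin.ext (by omega)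
  rw [← this]; simp

lemma word_nodup {n : ℕ} (σ : Equiv.Perm (Fin n)) : (word σ).Nodup := by
  unfold word
  rw [List.nodup_ofFn]
  intro i j h
  exact σ.injective (Fin.ext (by simpa using h))

lemma word_mem {n : ℕ} (σ : Equiv.Perm (Fin n)) {x : ℕ} (h : x ∈ word σ) : 1 ≤ x ∧ x ≤ n := by
  simp only [word, List.mem_ofFn] at h
  obtain ⟨i, rfl⟩ := h
  omega

lemma exists_word {n : ℕ} (W : List ℕ) (hlen : W.length = n) (hnd : W.Nodup)
    (hmem : ∀ x ∈ W, 1 ≤ x ∧ x ≤ n) : ∃ σ : Equiv.Perm (Fin n), word σ = W := by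
  subst hlen
  let f : Fin W.length → Fin W.length := fun i => ⟨W[i] - 1, by
    have := hmem W[i] (List.getElem_mem _); omega⟩
  have hf : Function.Injective f := by
    intro i j h
    have h1 := hmem W[i] (List.getElem_mem _)
    have h2 := hmem W[j] (List.getElem_mem _)
    have h3 : W[i] - 1 = W[j] - 1 := congrArg Fin.val h
    have h4 : W[i] = W[j] := by omega
    exact Fin.ext ((List.Nodup.getElem_inj_iff hnd).1 h4)
  refine ⟨Equiv.ofBijective f (Finite.injective_iff_bijective.1 hf), ?_⟩
  apply List.ext_getElem
  · simp [word]
  · intro i h1 h2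
    have := hmem W[i] (List.getElem_mem _)
    simp [word, f]
    omega

/-- the dot product of a primitive `σ₁ = π₁ 1 m τ₁ ∈ S_{m,1}^{1≺m}(1324)`
with `σ₂ = π₂ 1 θ₂ ℓ τ₂ ∈ S_{ℓ,k}^{1≺ℓ}(1324)` is the permutation of `{1,…,n}`,
`n = ℓ + m - 1`, whose one-line notation is `π̂₂ π₁ 1 m θ̂₂ n τ̂₂ τ₁` (hats mean all
entries increased by `m - 1`), and it belongs to `S_{n,k+1}^{1≺n}(1324)`. -/
theorem stmt_3 (m ℓ k : ℕ) (hm : 2 ≤ m) (hl : 2 ≤ ℓ) (hk : 1 ≤ k)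
    (σ₁ : Equiv.Perm (Fin m)) (σ₂ : Equiv.Perm (Fin ℓ))
    (h₁ : σ₁ ∈ SPerm m 1 1) (h₂ : σ₂ ∈ SPerm ℓ 1 k)
    (π₁ τ₁ π₂ θ₂ τ₂ : List ℕ)
    (hw₁ : word σ₁ = π₁ ++ 1 :: m :: τ₁)
    (hw₂ : word σ₂ = π₂ ++ 1 :: (θ₂ ++ ℓ :: τ₂)) :
    ∃ σ₃ : Equiv.Perm (Fin (ℓ + m - 1)),
      word σ₃ = π₂.map (· + (m - 1)) ++ π₁ ++ 1 :: m ::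
        (θ₂.map (· + (m - 1)) ++ (ℓ + m - 1) :: (τ₂.map (· + (m - 1)) ++ τ₁)) ∧
      σ₃ ∈ SPerm (ℓ + m - 1) 1 (k + 1) := by
  obtain ⟨av₁, _⟩ := h₁
  obtain ⟨av₂, hn₂, ha₂, hpos₂, -⟩ := h₂
  rw [avoids_iff] at av₁ av₂
  have nd₁ := word_nodup σ₁
  have nd₂ := word_nodup σ₂
  have mem₁ : ∀ x ∈ word σ₁, 1 ≤ x ∧ x ≤ m := fun x hx => word_mem σ₁ hx
  have mem₂ : ∀ x ∈ word σ₂, 1 ≤ x ∧ x ≤ ℓ := fun x hx => word_mem σ₂ hx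
  have len₁ : (word σ₁).length = m := by simp [word]
  have len₂ : (word σ₂).length = ℓ := by simp [word]
  have p1 := pos_word σ₂ π₂ _ 1 ⟨1 - 1, ha₂⟩ hw₂ rfl
  have p2 := pos_word σ₂ (π₂ ++ 1 :: θ₂) τ₂ ℓ ⟨ℓ - 1, hn₂⟩ (by simp [hw₂])
    (by show ℓ = ℓ - 1 + 1; omega)
  rw [p1, p2] at hpos₂
  simp only [List.length_append, List.length_cons] at hpos₂
  rw [hw₁] at av₁ nd₁ mem₁ len₁
  rw [hw₂] at av₂ nd₂ mem₂ len₂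
  -- bounds
  have bπ₁ : ∀ x ∈ π₁, 1 ≤ x ∧ x < m := by
    intro x hx
    have := mem₁ x (by simp [hx])
    have : x ≠ m := by rintro rfl; simp [List.nodup_append] at nd₁; grind
    omega
  have bτ₁ : ∀ x ∈ τ₁, 1 ≤ x ∧ x < m := by
    intro x hx
    have := mem₁ x (by simp [hx])
    have : x ≠ m := by rintro rfl; simp [List.nodup_append] at nd₁; grind
    omega
  have bR : ∀ x, (x ∈ π₂ ∨ x ∈ θ₂ ∨ x ∈ τ₂) → 2 ≤ x ∧ x ≤ ℓ := by
    intro x hx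
    have := mem₂ x (by simp; tauto)
    have : x ≠ 1 := by rintro rfl; simp [List.nodup_append] at nd₂; grind
    omega
  set f : ℕ → ℕ := fun x => x + (m - 1) with hf
  have finj : Function.Injective f := fun x y h => by simp only [hf] at h; omega
  have fl : ℓ + m - 1 = f ℓ := by simp only [hf]; omega
  have f1 : f 1 = m := by simp only [hf]; omega
  set A := π₂.map f with hA
  set B := (θ₂ ++ ℓ :: τ₂).map f with hB
  have bA : ∀ x ∈ A, m < x ∧ x ≤ ℓ + m - 1 := by
    intro x hx
    obtain ⟨y, hy, rfl⟩ := List.mem_map.1 hx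
    have := bR y (by tauto)
    simp only [hf]; omega
  have bB : ∀ x ∈ B, m < x ∧ x ≤ ℓ + m - 1 := by
    intro x hx
    obtain ⟨y, hy, rfl⟩ := List.mem_map.1 hx
    have : 2 ≤ y ∧ y ≤ ℓ := by
      simp at hy
      rcases hy with h | rfl | h
      · exact bR y (by tauto)
      · omega
      · exact bR y (by tauto)
    simp only [hf]; omega
  have hW : A ++ π₁ ++ 1 :: m :: (θ₂.map f ++ (ℓ + m - 1) :: (τ₂.map f ++ τ₁))
      = A ++ ((π₁ ++ [1]) ++ ([m] ++ (B ++ τ₁))) := by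
    simp [hB, fl]
  have hL2 : A ++ m :: B = (π₂ ++ 1 :: (θ₂ ++ ℓ :: τ₂)).map f := by
    rw [List.map_append, List.map_cons, f1]
  rw [hW]
  have ndL2 : (A ++ m :: B).Nodup := by rw [hL2]; exact nd₂.map finj
  set W := A ++ ((π₁ ++ [1]) ++ ([m] ++ (B ++ τ₁))) with hWd
  have bP : ∀ x ∈ π₁ ++ [1], 1 ≤ x ∧ x < m := by
    intro x hx
    simp at hx
    rcases hx with h | rfl
    · exact bπ₁ x h
    · omega
  have hWp : W.Perm ((π₁ ++ 1 :: m :: τ₁) ++ (A ++ B)) := by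
    rw [List.perm_iff_count]
    intro a
    simp [hWd, List.count_append, List.count_cons]
    omega
  have hWnd : W.Nodup := by
    rw [hWp.nodup_iff, List.nodup_append]
    refine ⟨nd₁, ndL2.sublist (by simp), ?_⟩
    intro a ha b hb
    have h1 := mem₁ a ha
    have h2 : m < b := by
      rcases List.mem_append.1 hb with h | h
      · exact (bA b h).1
      · exact (bB b h).1
    omega
  have hWlen : W.length = ℓ + m - 1 := by
    rw [hWp.length_eq, List.length_append, len₁]
    have : (A ++ m :: B).length = ℓ := by rw [hL2, List.length_map, len₂]
    simp at this ⊢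
    omega
  have hWmem : ∀ x ∈ W, 1 ≤ x ∧ x ≤ ℓ + m - 1 := by
    intro x hx
    rw [hWp.mem_iff, List.mem_append, List.mem_append (s := A)] at hx
    rcases hx with h | h | h
    · have := mem₁ x h; omega
    · have := bA x h; omega
    · have := bB x h; omega
  obtain ⟨σ₃, hσ₃⟩ := exists_word W hWlen hWnd hWmem
  refine ⟨σ₃, hσ₃, ?_, by omega, by omega, ?_, fun b hb => by omega⟩
  · rw [avoids_iff, hσ₃]
    have F1 : ∀ x y, x ≤ m → y ≤ m → List.Sublist [x, y] W →
        List.Sublist [x, y] (π₁ ++ 1 :: m :: τ₁) := by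
      intro x y hx hy h
      have h' := h.filter (fun z => decide (z ≤ m))
      have e1 : A.filter (fun z => decide (z ≤ m)) = [] := by
        rw [List.filter_eq_nil_iff]; intro z hz; have := bA z hz; simp; omega
      have e2 : B.filter (fun z => decide (z ≤ m)) = [] := by
        rw [List.filter_eq_nil_iff]; intro z hz; have := bB z hz; simp; omega
      have e3 : (π₁ ++ [1]).filter (fun z => decide (z ≤ m)) = π₁ ++ [1] := by
        rw [List.filter_eq_self]; intro z hz; have := bP z hz; simp; omega
      have e4 : τ₁.filter (fun z => decide (z ≤ m)) = τ₁ := by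
        rw [List.filter_eq_self]; intro z hz; have := bτ₁ z hz; simp; omega
      rw [hWd, List.filter_append, List.filter_append, e1, e3, List.filter_append, List.filter_append,
        e2, e4] at h'
      simpa [hx, hy] using h'
    have F2 : ∀ x y, m ≤ x → m ≤ y → List.Sublist [x, y] W →
        List.Sublist [x - (m - 1), y - (m - 1)] (π₂ ++ 1 :: (θ₂ ++ ℓ :: τ₂)) := by
      intro x y hx hy h
      have h' := h.filter (fun z => decide (m ≤ z))
      have e1 : A.filter (fun z => decide (m ≤ z)) = A := by
        rw [List.filter_eq_self]; intro z hz; have := bA z hz; simp; omega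
      have e2 : B.filter (fun z => decide (m ≤ z)) = B := by
        rw [List.filter_eq_self]; intro z hz; have := bB z hz; simp; omega
      have e3 : (π₁ ++ [1]).filter (fun z => decide (m ≤ z)) = [] := by
        rw [List.filter_eq_nil_iff]; intro z hz; have := bP z hz; simp; omega
      have e4 : τ₁.filter (fun z => decide (m ≤ z)) = [] := by
        rw [List.filter_eq_nil_iff]; intro z hz; have := bτ₁ z hz; simp; omega
      rw [hWd, List.filter_append, List.filter_append, e1, e3, List.filter_append, List.filter_append,
        e2, e4] at h'
      have h2 : List.Sublist [x, y] (A ++ m :: B) := by simpa [hx, hy] using h'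
      rw [hL2] at h2
      have h3 := h2.map (fun z => z - (m - 1))
      rw [List.map_map] at h3
      have : (fun z => z - (m - 1)) ∘ f = id := by
        funext z; simp [hf]
      rw [this, List.map_id] at h3
      simpa using h3
    have F3 : ∀ x y, x < m → m < y → List.Sublist [x, y] W →
        List.Sublist [x, m] W ∧ List.Sublist [m, y] W := by
      intro x y hx hy h
      have nA : x ∉ A := fun h => by have := bA x h; omega
      have nB : x ∉ B := fun h => by have := bB x h; omega
      have nP : y ∉ π₁ ++ [1] := fun h => by have := bP y h; omega
      have nT : y ∉ τ₁ := fun h => by have := bτ₁ y h; omega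
      have nx : x ∉ [m] := by simp; omega
      have key : x ∈ π₁ ++ [1] ∧ y ∈ B := by
        have sm : ∀ l, List.Sublist [x, y] l → x ∈ l ∧ y ∈ l := fun l h =>
          ⟨h.subset (by simp), h.subset (by simp)⟩
        rcases pair_sub_append h with h | h | h
        · exact absurd (sm _ h).1 nA
        · exact absurd h.1 nA
        rcases pair_sub_append h with h | h | h
        · exact absurd (sm _ h).2 nP
        · refine ⟨h.1, ?_⟩
          have := h.2
          simp only [List.mem_append, List.mem_singleton] at this
          rcases this with h | h | h
          · omega
          · exact h
          · exact absurd h nT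
        rcases pair_sub_append h with h | h | h
        · exact absurd (sm _ h).1 nx
        · exact absurd h.1 nx
        rcases pair_sub_append h with h | h | h
        · exact absurd (sm _ h).1 nB
        · exact absurd h.1 nB
        · exact absurd (sm _ h).2 nT
      constructor
      · exact (pair_sub_of_mem key.1 (by simp)).trans (List.sublist_append_right _ _)
      · refine List.Sublist.trans ?_ (List.sublist_append_right _ _)
        refine List.Sublist.trans ?_ (List.sublist_append_right _ _)
        exact pair_sub_of_mem (by simp) (List.mem_append_left _ key.2)
    have asymm : ∀ x y, List.Sublist [x, y] W → List.Sublist [y, x] W → False := by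
      intro x y h1 h2
      rw [← hσ₃, pair_word] at h1 h2
      obtain ⟨i, j, hij, hi, hj⟩ := h1
      obtain ⟨i', j', hij', hi', hj'⟩ := h2
      have e1 : i = j' := σ₃.injective (Fin.ext (by omega))
      have e2 : j = i' := σ₃.injective (Fin.ext (by omega))
      subst e1 e2
      exact absurd hij (not_lt.2 hij'.le)
    have trans' : ∀ x y z, List.Sublist [x, y] W → List.Sublist [y, z] W →
        List.Sublist [x, z] W := by
      intro x y z h1 h2
      rw [← hσ₃, pair_word] at h1 h2 ⊢
      obtain ⟨i, j, hij, hi, hj⟩ := h1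
      obtain ⟨i', j', hij', hi', hj'⟩ := h2
      have e1 : j = i' := σ₃.injective (Fin.ext (by omega))
      subst e1
      exact ⟨i, j', hij.trans hij', hi, hj'⟩
    intro a b c d hac hcb hbd hab hbc hcd
    by_cases ha : m ≤ a
    · exact av₂ _ _ _ _ (by omega) (by omega) (by omega)
        (F2 a b (by omega) (by omega) hab) (F2 b c (by omega) (by omega) hbc)
        (F2 c d (by omega) (by omega) hcd)
    by_cases hd : d ≤ m
    · exact av₁ _ _ _ _ hac hcb hbd
        (F1 a b (by omega) (by omega) hab) (F1 b c (by omega) (by omega) hbc)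
        (F1 c d (by omega) (by omega) hcd)
    by_cases hb : b ≤ m
    · have hcm := (F3 c d (by omega) (by omega) hcd).1
      have hne : b ≠ m := by
        rintro rfl
        exact asymm _ _ hbc hcm
      exact av₁ a b c m hac hcb (by omega)
        (F1 a b (by omega) (by omega) hab) (F1 b c (by omega) (by omega) hbc)
        (F1 c m (by omega) (by omega) hcm)
    have hmb := (F3 a b (by omega) (by omega) hab).2
    by_cases hc : c ≤ m
    · rcases Nat.lt_or_eq_of_le hc with hc | rfl
      · have hcm := (F3 c d (by omega) (by omega) hcd).1
        exact asymm _ _ hmb (trans' _ _ _ hbc hcm)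
      · exact asymm _ _ hmb hbc
    · exact av₂ (m - (m - 1)) _ _ _ (by omega) (by omega) (by omega)
        (F2 m b (by omega) (by omega) hmb) (F2 b c (by omega) (by omega) hbc)
        (F2 c d (by omega) (by omega) hcd)
  · rw [pos_word σ₃ (A ++ π₁) (m :: (B ++ τ₁)) 1 ⟨1 - 1, by omega⟩ (by simp [hσ₃, hWd]) rfl,
      pos_word σ₃ (A ++ π₁ ++ 1 :: m :: θ₂.map f) (τ₂.map f ++ τ₁) (ℓ + m - 1) _
        (by rw [hσ₃, ← hW]; simp) (by show ℓ + m - 1 = ℓ + m - 1 - 1 + 1; omega)]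
    simp
    omega
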